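/- Every matricially normed space E is the image of a completely strictly coisometric operator whose domain is an \widehat{M}-composed matricially normed space; that is, there exist an \widehat{M}-composed space G and a completely strictly coisometric operator τ : G → E. -/

import Mathlib

open scoped BigOperators
open Matrix

noncomputable section

/-- Block-diagonal sum `u ⊕ w` of two square matrices with entries in `E`. -/
def MatDSum {E : Type*} [Zero E] {m k : ℕ}
    (u : Matrix (Fin m) (Fin m) E) (w : Matrix (Fin k) (Fin k) E) :
    Matrix (Fin (m + k)) (Fin (m + k)) E :=
  Matrix.reindex finSumFinEquiv finSumFinEquiv (Matrix.fromBlocks u 0 0 w)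

/-- Left action `S·u` of a scalar matrix on an `E`-valued matrix. -/
def scalLeft {E : Type*} [AddCommMonoid E] [Module ℂ E] {m : ℕ}
    (S : Matrix (Fin m) (Fin m) ℂ) (u : Matrix (Fin m) (Fin m) E) :
    Matrix (Fin m) (Fin m) E :=
  Matrix.of fun i j => ∑ k, S i k • u k j

/-- Right action `u·S` of a scalar matrix on an `E`-valued matrix. -/
def scalRight {E : Type*} [AddCommMonoid E] [Module ℂ E] {m : ℕ}
    (u : Matrix (Fin m) (Fin m) E) (S : Matrix (Fin m) (Fin m) ℂ) :
    Matrix (Fin m) (Fin m) E :=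
  Matrix.of fun i j => ∑ k, S k j • u i k

/-- The operator norm `‖S‖_o` of a complex scalar matrix, i.e. its norm as an
operator on the euclidean (Hilbert) space `ℂⁿ`. -/
noncomputable def opNorm {m : ℕ} (S : Matrix (Fin m) (Fin m) ℂ) : ℝ :=
  ‖LinearMap.toContinuousLinearMap (Matrix.toEuclideanLin S)‖

/-- The `m`-th amplification of a map `φ : E → F`: apply `φ` entrywise. -/
def matAmpl {E F : Type*} (φ : E → F) {m : ℕ} (u : Matrix (Fin m) (Fin m) E) :
    Matrix (Fin m) (Fin m) F :=
  Matrix.of fun i j => φ (u i j)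

/-- The operator `φ^v : M_n → E`, `(λ_{ij}) ↦ Σ_{i,j} λ_{ji} • x_{ij}`, associated with
`v = (x_{ij}) ∈ M_n(E)`. -/
def matPhi {E : Type*} [AddCommMonoid E] [Module ℂ E] {n : ℕ}
    (v : Matrix (Fin n) (Fin n) E) (a : Matrix (Fin n) (Fin n) ℂ) : E :=
  ∑ i, ∑ j, a j i • v i j

/-- `ν` is a matrix-norm on the complex vector space `E`: each `ν m` is a norm on
`M_m(E)`, and Axioms 1 and 2 of Effros/Ruan hold. -/
def IsMatrixNorm {E : Type} [AddCommGroup E] [Module ℂ E]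
    (ν : ∀ m : ℕ, Matrix (Fin m) (Fin m) E → ℝ) : Prop :=
  (∀ (m : ℕ) (u v : Matrix (Fin m) (Fin m) E), ν m (u + v) ≤ ν m u + ν m v) ∧
  (∀ (m : ℕ) (c : ℂ) (u : Matrix (Fin m) (Fin m) E), ν m (c • u) = ‖c‖ * ν m u) ∧
  (∀ (m : ℕ) (u : Matrix (Fin m) (Fin m) E), ν m u = 0 ↔ u = 0) ∧
  (∀ (m k : ℕ) (u : Matrix (Fin m) (Fin m) E),
      ν (m + k) (MatDSum u (0 : Matrix (Fin k) (Fin k) E)) = ν m u) ∧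
  (∀ (m : ℕ) (S : Matrix (Fin m) (Fin m) ℂ) (u : Matrix (Fin m) (Fin m) E),
      ν m (scalLeft S u) ≤ opNorm S * ν m u) ∧
  (∀ (m : ℕ) (u : Matrix (Fin m) (Fin m) E) (S : Matrix (Fin m) (Fin m) ℂ),
      ν m (scalRight u S) ≤ ν m u * opNorm S)

/-- The set of values `‖(φ^v)_m(u)‖_m` over all proper couples `(E, v)`, i.e. over all
matricially normed spaces `E` and all `v` in the closed unit ball of `M_n(E)`. -/
def hatNormSet (n : ℕ) {m : ℕ}
    (u : Matrix (Fin m) (Fin m) (Matrix (Fin n) (Fin n) ℂ)) : Set ℝ :=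
  { r | ∃ (E : Type) (_ : AddCommGroup E) (_ : Module ℂ E)
        (ν : ∀ m' : ℕ, Matrix (Fin m') (Fin m') E → ℝ),
        IsMatrixNorm ν ∧
        ∃ v : Matrix (Fin n) (Fin n) E, ν n v ≤ 1 ∧ r = ν m (matAmpl (matPhi v) u) }

/-- The matrix-norm of the matricially normed space `M̂_n`:
`‖u‖_m = sup { ‖(φ^v)_m(u)‖_m : (E, v) a proper couple }`. -/
noncomputable def hatNorm (n : ℕ) {m : ℕ}
    (u : Matrix (Fin m) (Fin m) (Matrix (Fin n) (Fin n) ℂ)) : ℝ :=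
  sSup (hatNormSet n u)

/-- `φ` is a completely contractive (linear) operator between the matricially normed
spaces `(E, νE)` and `(F, νF)`: every amplification `φ_m` is contractive. -/
def IsCC {E F : Type} [AddCommGroup E] [Module ℂ E] [AddCommGroup F] [Module ℂ F]
    (νE : ∀ m : ℕ, Matrix (Fin m) (Fin m) E → ℝ)
    (νF : ∀ m : ℕ, Matrix (Fin m) (Fin m) F → ℝ) (φ : E → F) : Prop :=
  IsLinearMap ℂ φ ∧
  ∀ (m : ℕ) (u : Matrix (Fin m) (Fin m) E), νF m (matAmpl φ u) ≤ νE m u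

open DirectSum

/-- The `i`-th component matrix of a matrix with entries in a direct sum. -/
def compMat {ι : Type} {E : ι → Type} [∀ i, AddCommGroup (E i)] {m : ℕ}
    (u : Matrix (Fin m) (Fin m) (⨁ i, E i)) (i : ι) :
    Matrix (Fin m) (Fin m) (E i) :=
  Matrix.of fun a b => u a b i

/-- The matrix-norm of the matricial `ℓ¹`-sum of the family `(E i, ν i)`:
`‖⊕_i u_i‖_m = Σ_i ‖u_i‖_m` (a finite sum, since only finitely many components of a
matrix over the algebraic direct sum are nonzero). -/
noncomputable def l1Norm {ι : Type} {E : ι → Type} [∀ i, AddCommGroup (E i)]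
    (ν : ∀ i, ∀ m : ℕ, Matrix (Fin m) (Fin m) (E i) → ℝ)
    (m : ℕ) (u : Matrix (Fin m) (Fin m) (⨁ i, E i)) : ℝ :=
  ∑ᶠ i, ν i m (compMat u i)

/-- `τ` is a completely strictly coisometric operator between the matricially normed
spaces `(E, νE)` and `(F, νF)`: every amplification `τ_m` maps the closed unit ball of
`M_m(E)` onto the closed unit ball of `M_m(F)`. -/
def IsCSC {E F : Type} [AddCommGroup E] [Module ℂ E] [AddCommGroup F] [Module ℂ F]
    (νE : ∀ m : ℕ, Matrix (Fin m) (Fin m) E → ℝ)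
    (νF : ∀ m : ℕ, Matrix (Fin m) (Fin m) F → ℝ) (τ : E → F) : Prop :=
  IsLinearMap ℂ τ ∧
  ∀ m : ℕ, (fun u : Matrix (Fin m) (Fin m) E => matAmpl τ u) ''
      { u | νE m u ≤ 1 } = { w | νF m w ≤ 1 }

/-- The underlying space of an `M̂`-composed matricially normed space: the matricial
`ℓ¹`-sum of a family of spaces each of which is some `M̂_{d i}`. -/
abbrev HatComposed (ι : Type) (d : ι → ℕ) : Type :=
  ⨁ i : ι, Matrix (Fin (d i)) (Fin (d i)) ℂ

/-- The matrix-norm of the `M̂`-composed space `⊕_i M̂_{d i}`. -/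
noncomputable def hatComposedNorm (ι : Type) (d : ι → ℕ) :
    ∀ m : ℕ, Matrix (Fin m) (Fin m) (HatComposed ι d) → ℝ :=
  l1Norm (fun i m (u : Matrix (Fin m) (Fin m) (Matrix (Fin (d i)) (Fin (d i)) ℂ)) =>
    hatNorm (d i) u)

/-!
The matrices `v` in the closed unit balls of the spaces `M_n(E)`, `0 < n`, index an `ℓ¹`-sum of the
spaces `M̂_n`, on which the operators `φ^v` assemble to a single operator `τ`. It is completely
contractive because each `φ^v` is, by the very definition of the norm of `M̂_n` as a supremum. The
supremum is finite, since compressing by matrix units bounds the norm of every entry of a matrix by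
the norm of the matrix, which in turn is at most the sum of the norms of its entries. The
amplification of `φ^v` sends the matrix `(e_{ji})_{ij}` of matrix units to `v`, and since this holds
for every proper couple, that matrix lies in the closed unit ball of `M_n(M̂_n)`. So every `v` is
attained on the closed unit ball.
-/

theorem opNorm_single_le {m : ℕ} (i j : Fin m) (c : ℂ) : opNorm (single i j c) ≤ ‖c‖ := by
  refine ContinuousLinearMap.opNorm_le_bound _ (norm_nonneg c) fun x => ?_
  have apply_eq : toEuclideanLin (single i j c) x = EuclideanSpace.single i (c * x j) := by
    ext k
    simp [single_mulVec_eq, Pi.single_apply]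
  simpa [apply_eq] using mul_le_mul_of_nonneg_left (PiLp.norm_apply_le x j) (norm_nonneg c)

theorem scalLeft_single_scalRight_single {E : Type*} [AddCommMonoid E] [Module ℂ E] {m : ℕ}
    (v : Matrix (Fin m) (Fin m) E) (p i j q : Fin m) :
    scalLeft (single p i 1) (scalRight v (single j q 1)) = single p q (v i j) := by
  ext a b
  by_cases ha : p = a <;> by_cases hb : q = b <;>
    simp [scalLeft, scalRight, single_apply, ha, hb]

theorem matDSum_single_zero {E : Type*} [Zero E] {m : ℕ} (k : ℕ) (i j : Fin m) (x : E) :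
    MatDSum (single i j x) (0 : Matrix (Fin k) (Fin k) E) =
      single (Fin.castAdd k i) (Fin.castAdd k j) x := by
  ext a b
  refine Fin.addCases (fun a => ?_) (fun a => ?_) a <;>
    refine Fin.addCases (fun b => ?_) (fun b => ?_) b <;>
    simp [MatDSum, single_apply, Fin.ext_iff] <;> omega

namespace IsMatrixNorm

variable {E : Type} [AddCommGroup E] [Module ℂ E] {ν : ∀ m : ℕ, Matrix (Fin m) (Fin m) E → ℝ}

theorem add_le (h : IsMatrixNorm ν) {m : ℕ} (u v : Matrix (Fin m) (Fin m) E) :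
    ν m (u + v) ≤ ν m u + ν m v :=
  h.1 m u v

theorem smul (h : IsMatrixNorm ν) {m : ℕ} (c : ℂ) (u : Matrix (Fin m) (Fin m) E) :
    ν m (c • u) = ‖c‖ * ν m u :=
  h.2.1 m c u

theorem zero (h : IsMatrixNorm ν) (m : ℕ) : ν m 0 = 0 :=
  (h.2.2.1 m 0).2 rfl

theorem matDSum_zero (h : IsMatrixNorm ν) {m : ℕ} (k : ℕ) (u : Matrix (Fin m) (Fin m) E) :
    ν (m + k) (MatDSum u (0 : Matrix (Fin k) (Fin k) E)) = ν m u :=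
  h.2.2.2.1 m k u

theorem scalLeft_le (h : IsMatrixNorm ν) {m : ℕ} (S : Matrix (Fin m) (Fin m) ℂ)
    (u : Matrix (Fin m) (Fin m) E) : ν m (scalLeft S u) ≤ opNorm S * ν m u :=
  h.2.2.2.2.1 m S u

theorem scalRight_le (h : IsMatrixNorm ν) {m : ℕ} (u : Matrix (Fin m) (Fin m) E)
    (S : Matrix (Fin m) (Fin m) ℂ) : ν m (scalRight u S) ≤ ν m u * opNorm S :=
  h.2.2.2.2.2 m u S

theorem nonneg (h : IsMatrixNorm ν) {m : ℕ} (u : Matrix (Fin m) (Fin m) E) : 0 ≤ ν m u :=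
  apply_nonneg (Seminorm.of (ν m) h.add_le h.smul) u

theorem sum_le (h : IsMatrixNorm ν) {m : ℕ} {κ : Type*} (s : Finset κ)
    (u : κ → Matrix (Fin m) (Fin m) E) : ν m (∑ i ∈ s, u i) ≤ ∑ i ∈ s, ν m (u i) :=
  Finset.le_sum_of_subadditive (ν m) (h.zero m).le h.add_le s u

theorem scalLeft_scalRight_le (h : IsMatrixNorm ν) {m : ℕ} {S T : Matrix (Fin m) (Fin m) ℂ}
    (hS : opNorm S ≤ 1) (hT : opNorm T ≤ 1) (u : Matrix (Fin m) (Fin m) E) :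
    ν m (scalLeft S (scalRight u T)) ≤ ν m u :=
  calc ν m (scalLeft S (scalRight u T))
    _ ≤ opNorm S * ν m (scalRight u T) := h.scalLeft_le S _
    _ ≤ ν m (scalRight u T) := mul_le_of_le_one_left (h.nonneg _) hS
    _ ≤ ν m u * opNorm T := h.scalRight_le u T
    _ ≤ ν m u := mul_le_of_le_one_right (h.nonneg u) hT

theorem single_apply_le (h : IsMatrixNorm ν) {m : ℕ} (p q i j : Fin m)
    (v : Matrix (Fin m) (Fin m) E) : ν m (single p q (v i j)) ≤ ν m v := by
  have opNorm_unit_le (k l : Fin m) : opNorm (single k l 1) ≤ 1 := by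
    simpa using opNorm_single_le k l 1
  rw [← scalLeft_single_scalRight_single]
  exact h.scalLeft_scalRight_le (opNorm_unit_le p i) (opNorm_unit_le j q) v

theorem single_eq (h : IsMatrixNorm ν) {m : ℕ} (i j : Fin m) (x : E) :
    ν m (single i j x) = ν 1 (single 0 0 x) := by
  obtain ⟨k, rfl⟩ : ∃ k, m = 1 + k := Nat.exists_eq_add_of_le i.pos
  have single_le (p q r s : Fin (1 + k)) : ν _ (single p q x) ≤ ν _ (single r s x) := by
    simpa using h.single_apply_le p q r s (single r s x)
  calc ν (1 + k) (single i j x)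
    _ = ν (1 + k) (single (Fin.castAdd k 0) (Fin.castAdd k 0) x) :=
      (single_le ..).antisymm (single_le ..)
    _ = ν 1 (single 0 0 x) := by rw [← matDSum_single_zero, h.matDSum_zero]

theorem apply_le (h : IsMatrixNorm ν) {m : ℕ} (v : Matrix (Fin m) (Fin m) E) (i j : Fin m) :
    ν 1 (single 0 0 (v i j)) ≤ ν m v :=
  (h.single_eq i j _).symm.trans_le (h.single_apply_le i j i j v)

theorem le_sum_apply (h : IsMatrixNorm ν) {m : ℕ} (u : Matrix (Fin m) (Fin m) E) :
    ν m u ≤ ∑ i, ∑ j, ν 1 (single 0 0 (u i j)) :=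
  calc ν m u
    _ = ν m (∑ i, ∑ j, single i j (u i j)) := by rw [← matrix_eq_sum_single]
    _ ≤ ∑ i, ∑ j, ν m (single i j (u i j)) :=
      (h.sum_le _ _).trans (Finset.sum_le_sum fun _ _ => h.sum_le _ _)
    _ = ∑ i, ∑ j, ν 1 (single 0 0 (u i j)) := by simp only [h.single_eq]

theorem single_matPhi_le (h : IsMatrixNorm ν) {n : ℕ} (v : Matrix (Fin n) (Fin n) E)
    (a : Matrix (Fin n) (Fin n) ℂ) :
    ν 1 (single 0 0 (matPhi v a)) ≤ (∑ i, ∑ j, ‖a j i‖) * ν n v :=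
  calc ν 1 (single 0 0 (matPhi v a))
    _ = ν 1 (∑ i, ∑ j, a j i • single 0 0 (v i j)) := by
      simp only [matPhi, ← singleLinearMap_apply ℂ, map_sum, map_smul]
    _ ≤ ∑ i, ∑ j, ν 1 (a j i • single 0 0 (v i j)) :=
      (h.sum_le _ _).trans (Finset.sum_le_sum fun _ _ => h.sum_le _ _)
    _ = ∑ i, ∑ j, ‖a j i‖ * ν 1 (single 0 0 (v i j)) := by simp only [h.smul]
    _ ≤ ∑ i, ∑ j, ‖a j i‖ * ν n v := by
      gcongr with i _ j _
      exact h.apply_le v i j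
    _ = (∑ i, ∑ j, ‖a j i‖) * ν n v := by simp only [Finset.sum_mul]

theorem matAmpl_matPhi_le (h : IsMatrixNorm ν) {n m : ℕ} (v : Matrix (Fin n) (Fin n) E)
    (u : Matrix (Fin m) (Fin m) (Matrix (Fin n) (Fin n) ℂ)) :
    ν m (matAmpl (matPhi v) u) ≤ (∑ a, ∑ b, ∑ i, ∑ j, ‖u a b j i‖) * ν n v :=
  calc ν m (matAmpl (matPhi v) u)
    _ ≤ ∑ a, ∑ b, ν 1 (single 0 0 (matPhi v (u a b))) := h.le_sum_apply _
    _ ≤ ∑ a, ∑ b, (∑ i, ∑ j, ‖u a b j i‖) * ν n v := by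
      gcongr with a _ b _
      exact h.single_matPhi_le v (u a b)
    _ = (∑ a, ∑ b, ∑ i, ∑ j, ‖u a b j i‖) * ν n v := by simp only [Finset.sum_mul]

end IsMatrixNorm

section MatrixUnits

variable {E : Type*} [AddCommMonoid E] [Module ℂ E] {n : ℕ}

/-- The operator `φ^v = matPhi v`, bundled as a linear map. -/
def matPhiLinear (v : Matrix (Fin n) (Fin n) E) : Matrix (Fin n) (Fin n) ℂ →ₗ[ℂ] E where
  toFun := matPhi v
  map_add' a b := by simp [matPhi, add_smul, Finset.sum_add_distrib]
  map_smul' c a := by simp [matPhi, Finset.smul_sum, mul_smul]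

/-- The matrix `(e_{ji})_{ij} ∈ M_n(M_n)` of matrix units, which `φ^v` amplifies to `v`. The
transposition matches the one in the definition of `φ^v`. -/
def matrixUnits (n : ℕ) : Matrix (Fin n) (Fin n) (Matrix (Fin n) (Fin n) ℂ) :=
  of fun i j => single j i 1

theorem matAmpl_matPhi_matrixUnits (v : Matrix (Fin n) (Fin n) E) :
    matAmpl (matPhi v) (matrixUnits n) = v := by
  ext i j
  simp [matAmpl, matPhi, matrixUnits, single_apply, ite_and]

end MatrixUnits

section HatNorm

variable {n m : ℕ}

theorem bddAbove_hatNormSet (u : Matrix (Fin m) (Fin m) (Matrix (Fin n) (Fin n) ℂ)) :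
    BddAbove (hatNormSet n u) := by
  refine ⟨∑ a, ∑ b, ∑ i, ∑ j, ‖u a b j i‖, ?_⟩
  rintro _ ⟨F, _, _, ν, h, v, hv, rfl⟩
  exact (h.matAmpl_matPhi_le v u).trans (mul_le_of_le_one_right (by positivity) hv)

theorem isCC_matPhi {E : Type} [AddCommGroup E] [Module ℂ E]
    {ν : ∀ m : ℕ, Matrix (Fin m) (Fin m) E → ℝ} (h : IsMatrixNorm ν)
    {v : Matrix (Fin n) (Fin n) E} (hv : ν n v ≤ 1) :
    IsCC (fun _ => hatNorm n) ν (matPhi v) :=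
  ⟨(matPhiLinear v).isLinear, fun _ u =>
    le_csSup (bddAbove_hatNormSet u) ⟨E, _, _, ν, h, v, hv, rfl⟩⟩

theorem hatNorm_zero :
    hatNorm n (0 : Matrix (Fin m) (Fin m) (Matrix (Fin n) (Fin n) ℂ)) = 0 := by
  have subset_zero :
      hatNormSet n (0 : Matrix (Fin m) (Fin m) (Matrix (Fin n) (Fin n) ℂ)) ⊆ {0} := by
    rintro _ ⟨F, _, _, ν, h, v, -, rfl⟩
    exact le_antisymm (by simpa using h.matAmpl_matPhi_le v 0) (h.nonneg _)
  rcases Set.subset_singleton_iff_eq.1 subset_zero with h | h <;> simp [hatNorm, h]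

theorem hatNorm_matrixUnits_le_one (n : ℕ) : hatNorm n (matrixUnits n) ≤ 1 := by
  refine Real.sSup_le ?_ zero_le_one
  rintro _ ⟨F, _, _, ν, -, v, hv, rfl⟩
  rwa [matAmpl_matPhi_matrixUnits]

end HatNorm

section L1Norm

variable {ι : Type} {E : ι → Type} [∀ i, AddCommGroup (E i)] {m : ℕ}
  {ν : ∀ i, ∀ m : ℕ, Matrix (Fin m) (Fin m) (E i) → ℝ}

theorem finite_support_compMat (u : Matrix (Fin m) (Fin m) (⨁ i, E i)) :
    {i | compMat u i ≠ 0}.Finite := by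
  refine (Set.finite_iUnion fun a => Set.finite_iUnion fun b =>
    DFinsupp.finite_support (u a b)).subset fun i (hi : compMat u i ≠ 0) => ?_
  contrapose! hi
  have apply_eq_zero : ∀ a b, u a b i = 0 := by simpa using hi
  exact Matrix.ext apply_eq_zero

theorem l1Norm_eq_sum (hν : ∀ i, ν i m 0 = 0) {u : Matrix (Fin m) (Fin m) (⨁ i, E i)}
    {s : Finset ι} (hs : ∀ i, compMat u i ≠ 0 → i ∈ s) :
    l1Norm ν m u = ∑ i ∈ s, ν i m (compMat u i) :=
  finsum_eq_sum_of_support_subset _ fun i hi => hs i fun h => hi (by simp only [h, hν])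

theorem l1Norm_zero (hν : ∀ i, ν i m 0 = 0) : l1Norm ν m 0 = 0 := by
  simpa using l1Norm_eq_sum hν (u := 0) (s := ∅) fun _ h => (h rfl).elim

variable [∀ i, Module ℂ (E i)] [DecidableEq ι]

theorem compMat_matAmpl_lof_self (i : ι) (u : Matrix (Fin m) (Fin m) (E i)) :
    compMat (matAmpl (lof ℂ ι E i) u) i = u := by
  ext a b
  simp [compMat, matAmpl]

theorem compMat_matAmpl_lof_of_ne {i j : ι} (hij : j ≠ i) (u : Matrix (Fin m) (Fin m) (E i)) :
    compMat (matAmpl (lof ℂ ι E i) u) j = 0 := by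
  ext a b
  exact of_eq_of_ne _ _ _ hij

theorem l1Norm_matAmpl_lof (hν : ∀ i, ν i m 0 = 0) (i : ι) (u : Matrix (Fin m) (Fin m) (E i)) :
    l1Norm ν m (matAmpl (lof ℂ ι E i) u) = ν i m u := by
  have mem_singleton (j : ι) (hj : compMat (matAmpl (lof ℂ ι E i) u) j ≠ 0) :
      j ∈ ({i} : Finset ι) := by
    contrapose! hj
    exact compMat_matAmpl_lof_of_ne (by simpa using hj) u
  rw [l1Norm_eq_sum hν mem_singleton, Finset.sum_singleton, compMat_matAmpl_lof_self]

theorem matAmpl_toModule_lof {F : Type*} [AddCommMonoid F] [Module ℂ F] (φ : ∀ i, E i →ₗ[ℂ] F)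
    (i : ι) (u : Matrix (Fin m) (Fin m) (E i)) :
    matAmpl (toModule ℂ ι F φ) (matAmpl (lof ℂ ι E i) u) = matAmpl (φ i) u := by
  ext a b
  simp [matAmpl]

theorem matAmpl_toModule {F : Type*} [AddCommMonoid F] [Module ℂ F] (φ : ∀ i, E i →ₗ[ℂ] F)
    {u : Matrix (Fin m) (Fin m) (⨁ i, E i)} {s : Finset ι}
    (hs : ∀ i, compMat u i ≠ 0 → i ∈ s) :
    matAmpl (toModule ℂ ι F φ) u = ∑ i ∈ s, matAmpl (φ i) (compMat u i) := by
  classical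
  ext a b
  have support_subset : (u a b).support ⊆ s := fun i hi =>
    hs i fun h => DFinsupp.mem_support_iff.1 hi (congr_fun₂ h a b)
  have sum_lof : ∑ i ∈ s, lof ℂ ι E i (u a b i) = u a b := by
    conv_rhs => rw [← sum_support_of (u a b)]
    refine (Finset.sum_subset support_subset fun i _ hi => ?_).symm
    rw [DFinsupp.notMem_support_iff.1 hi, map_zero]
  calc toModule ℂ ι F φ (u a b)
    _ = toModule ℂ ι F φ (∑ i ∈ s, lof ℂ ι E i (u a b i)) := by rw [sum_lof]
    _ = ∑ i ∈ s, φ i (u a b i) := by simp only [map_sum, toModule_lof]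
    _ = (∑ i ∈ s, matAmpl (φ i) (compMat u i)) a b := by
      simp [Matrix.sum_apply, matAmpl, compMat]

theorem isCC_toModule {F : Type} [AddCommGroup F] [Module ℂ F]
    {νF : ∀ m : ℕ, Matrix (Fin m) (Fin m) F → ℝ} (hF : IsMatrixNorm νF)
    (hν : ∀ i m, ν i m 0 = 0) {φ : ∀ i, E i →ₗ[ℂ] F} (hφ : ∀ i, IsCC (ν i) νF (φ i)) :
    IsCC (l1Norm ν) νF (toModule ℂ ι F φ) := by
  refine ⟨LinearMap.isLinear _, fun m u => ?_⟩
  let s : Finset ι := (finite_support_compMat u).toFinset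
  have hs (i : ι) (hi : compMat u i ≠ 0) : i ∈ s := (finite_support_compMat u).mem_toFinset.2 hi
  calc νF m (matAmpl (toModule ℂ ι F φ) u)
    _ = νF m (∑ i ∈ s, matAmpl (φ i) (compMat u i)) := by rw [matAmpl_toModule φ hs]
    _ ≤ ∑ i ∈ s, νF m (matAmpl (φ i) (compMat u i)) := hF.sum_le _ _
    _ ≤ ∑ i ∈ s, ν i m (compMat u i) := Finset.sum_le_sum fun i _ => (hφ i).2 m _
    _ = l1Norm ν m u := (l1Norm_eq_sum (hν · m) hs).symm

end L1Norm

theorem IsCC.isCSC {E F : Type} [AddCommGroup E] [Module ℂ E] [AddCommGroup F] [Module ℂ F]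
    {νE : ∀ m : ℕ, Matrix (Fin m) (Fin m) E → ℝ} {νF : ∀ m : ℕ, Matrix (Fin m) (Fin m) F → ℝ}
    {φ : E → F} (hφ : IsCC νE νF φ)
    (lift : ∀ m (w : Matrix (Fin m) (Fin m) F), νF m w ≤ 1 → ∃ u, νE m u ≤ 1 ∧ matAmpl φ u = w) :
    IsCSC νE νF φ :=
  ⟨hφ.1, fun m => Set.Subset.antisymm
    (Set.image_subset_iff.2 fun u hu => (hφ.2 m u).trans hu) (lift m)⟩

section UnitBall

variable {E : Type}

/-- The matrices of positive size in the closed unit balls of the spaces `M_n(E)`, that is, the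
proper couples `(E, v)`; they index the summands of the `M̂`-composed space which is
mapped onto `E`. -/
structure UnitBallMatrix (ν : ∀ m : ℕ, Matrix (Fin m) (Fin m) E → ℝ) where
  size : ℕ
  size_pos : 0 < size
  mat : Matrix (Fin size) (Fin size) E
  norm_le_one : ν size mat ≤ 1

variable [AddCommGroup E] [Module ℂ E] (ν : ∀ m : ℕ, Matrix (Fin m) (Fin m) E → ℝ)

instance : DecidableEq (UnitBallMatrix ν) :=
  Classical.decEq _

/-- The operator `τ : ⨁ v, M̂_{size v} → E` which is `φ^v` on the summand with index `v`. -/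
def unitBallMap : HatComposed (UnitBallMatrix ν) UnitBallMatrix.size →ₗ[ℂ] E :=
  toModule ℂ _ E fun v => matPhiLinear v.mat

variable {ν}

theorem isCC_unitBallMap (h : IsMatrixNorm ν) :
    IsCC (hatComposedNorm (UnitBallMatrix ν) UnitBallMatrix.size) ν (unitBallMap ν) :=
  isCC_toModule h (fun _ _ => hatNorm_zero) fun v => isCC_matPhi h v.norm_le_one

theorem exists_matAmpl_unitBallMap_eq {m : ℕ} (w : Matrix (Fin m) (Fin m) E) (hw : ν m w ≤ 1) :
    ∃ u, hatComposedNorm (UnitBallMatrix ν) UnitBallMatrix.size m u ≤ 1 ∧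
      matAmpl (unitBallMap ν) u = w := by
  rcases Nat.eq_zero_or_pos m with rfl | hm
  · exact ⟨0, (l1Norm_zero fun _ => hatNorm_zero).trans_le zero_le_one, Subsingleton.elim _ _⟩
  · let v : UnitBallMatrix ν := ⟨m, hm, w, hw⟩
    refine ⟨matAmpl (lof ℂ _ _ v) (matrixUnits m), ?_, ?_⟩
    · exact (l1Norm_matAmpl_lof (fun _ => hatNorm_zero) v _).trans_le
        (hatNorm_matrixUnits_le_one m)
    · exact (matAmpl_toModule_lof _ v _).trans (matAmpl_matPhi_matrixUnits w)

end UnitBall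

/-- **Theorem 5 (i).** Every matricially normed space `(E, νE)` is the image of a
completely strictly coisometric operator whose domain is an `M̂`-composed matricially
normed space. -/
theorem exists_csc_from_hatComposed (E : Type) [AddCommGroup E] [Module ℂ E]
    (νE : ∀ m : ℕ, Matrix (Fin m) (Fin m) E → ℝ) (hE : IsMatrixNorm νE) :
    ∃ (ι : Type) (d : ι → ℕ), (∀ i, 0 < d i) ∧
      ∃ τ : HatComposed ι d → E, IsCSC (hatComposedNorm ι d) νE τ :=
  ⟨UnitBallMatrix νE, UnitBallMatrix.size, UnitBallMatrix.size_pos, unitBallMap νE,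
    (isCC_unitBallMap hE).isCSC fun _ => exists_matAmpl_unitBallMap_eq⟩
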